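/- Mutual information bound via the shift-free channel: in the MRA model, the mutual information between the signal and all n measurements satisfies I(X; Y^n) ≤ (L/2)·log(1 + n/σ²), where Y^n = (Y_1,…,Y_n). -/

import Mathlib

open MeasureTheory ProbabilityTheory Filter
open scoped ENNReal

namespace MRAformal

/-- Standard Gaussian measure `N(0, I_L)` on `ℝ^L`. -/
noncomputable def stdGaussian (L : ℕ) : Measure (Fin L → ℝ) :=
  Measure.pi fun _ => gaussianReal 0 1

/-- Uniform distribution on `{0, …, L-1}`. -/
noncomputable def unifFin (L : ℕ) : Measure (Fin L) :=
  ((L : ℝ≥0∞))⁻¹ • Measure.count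

/-- Alignment distortion `ρ(x, x̂) = L⁻¹ min_ℓ ‖x - R_ℓ x̂‖²`,
where `(R_ℓ x̂)_j = x̂_{j+ℓ mod L}`. -/
noncomputable def rho (L : ℕ) (x xh : Fin L → ℝ) : ℝ :=
  (L : ℝ)⁻¹ * ⨅ ℓ : Fin L, ∑ j, (x j - xh (j + ℓ)) ^ 2

/-- Base probability space for the MRA model with `n` samples:
the signal `X`, the i.i.d. uniform shifts `ℓ_i`, and the i.i.d. Gaussian noises `Z_i`. -/
noncomputable def mraBase (L n : ℕ) :
    Measure ((Fin L → ℝ) × (Fin n → Fin L) × (Fin n → Fin L → ℝ)) :=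
  (stdGaussian L).prod ((Measure.pi fun _ => unifFin L).prod (Measure.pi fun _ => stdGaussian L))

/-- The measurements `Y_i = R_{ℓ_i} X + σ Z_i`. -/
def mraY (L n : ℕ) (σ : ℝ) (ω : (Fin L → ℝ) × (Fin n → Fin L) × (Fin n → Fin L → ℝ)) :
    Fin n → Fin L → ℝ :=
  fun i j => ω.1 (j + ω.2.1 i) + σ * ω.2.2 i j

/-- `MSE*_MRA(L, σ², n)`: the infimum over measurable estimators `X̂(Y_1,…,Y_n)` of `E ρ(X, X̂)`.
Here `σ` is the noise standard deviation. -/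
noncomputable def MSEstarMRA (L n : ℕ) (σ : ℝ) : ℝ :=
  sInf { e : ℝ | ∃ f : (Fin n → Fin L → ℝ) → (Fin L → ℝ), Measurable f ∧
    e = ∫ ω, rho L ω.1 (f (mraY L n σ ω)) ∂(mraBase L n) }

/-- `n*_MRA(L, σ², ε) = min {n : MSE*_MRA(L, σ², n) ≤ ε}`. -/
noncomputable def nstarMRA (L : ℕ) (σ ε : ℝ) : ℕ :=
  sInf { n : ℕ | MSEstarMRA L n σ ≤ ε }

/-- Noise level such that `σ²(α) = L / (α log L)`. -/
noncomputable def sigmaAlpha (L : ℕ) (α : ℝ) : ℝ :=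
  Real.sqrt ((L : ℝ) / (α * Real.log L))

/-- `n*_MRA(L, α, ε) := n*_MRA(L, σ²(α), ε)`. -/
noncomputable def nstarMRAa (L : ℕ) (α ε : ℝ) : ℕ :=
  nstarMRA L (sigmaAlpha L α) ε

/-- Mutual information `I(U; V)`: the Kullback–Leibler divergence of the joint law with
respect to the product of its marginals (natural logarithm), expressed as the integral of
the log of the Radon–Nikodym derivative. -/
noncomputable def mutualInfo {α β : Type*} [MeasurableSpace α] [MeasurableSpace β]
    (μ : Measure (α × β)) : ℝ :=
  ∫ p, Real.log ((μ.rnDeriv ((μ.map Prod.fst).prod (μ.map Prod.snd))) p).toReal ∂μ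

/-- Joint law of `(X, (Y_1,…,Y_n))` in the MRA model. -/
noncomputable def mraJoint (L n : ℕ) (σ : ℝ) :
    Measure ((Fin L → ℝ) × (Fin n → Fin L → ℝ)) :=
  (mraBase L n).map fun ω => (ω.1, mraY L n σ ω)

/-- Joint law of `(X, Y)` for a single MRA measurement `Y = R_ℓ X + σ Z`. -/
noncomputable def mraJoint1 (L : ℕ) (σ : ℝ) : Measure ((Fin L → ℝ) × (Fin L → ℝ)) :=
  ((stdGaussian L).prod ((unifFin L).prod (stdGaussian L))).map
    fun ω => (ω.1, fun j => ω.1 (j + ω.2.1) + σ * ω.2.2 j)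


open scoped NNReal

instance (L : ℕ) : IsProbabilityMeasure (stdGaussian L) := by
  unfold stdGaussian; infer_instance

theorem lintegral_pi_prod {ι : Type*} [Fintype ι] {E : ι → Type*} [∀ i, MeasurableSpace (E i)]
    (μ : ∀ i, Measure (E i)) [∀ i, IsProbabilityMeasure (μ i)] (f : ∀ i, E i → ℝ≥0∞)
    (hf : ∀ i, Measurable (f i)) :
    ∫⁻ x, ∏ i, f i (x i) ∂(Measure.pi μ) = ∏ i, ∫⁻ x, f i x ∂(μ i) := by
  have h := iIndepFun_pi (μ := μ) (X := f) (fun i => (hf i).aemeasurable)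
  have h2 := lintegral_prod_eq_prod_lintegral_of_indepFun Finset.univ
    (fun i (ω : ∀ i, E i) => f i (ω i)) h (fun i => (hf i).comp (measurable_pi_apply i))
  rw [h2]
  refine Finset.prod_congr rfl fun i _ => ?_
  exact (measurePreserving_eval μ i).lintegral_comp (hf i)

theorem pi_withDensity {ι : Type*} [Fintype ι] {E : ι → Type*} [∀ i, MeasurableSpace (E i)]
    (μ : ∀ i, Measure (E i)) [∀ i, IsProbabilityMeasure (μ i)] (f : ∀ i, E i → ℝ≥0∞)
    (hf : ∀ i, Measurable (f i)) [∀ i, SigmaFinite ((μ i).withDensity (f i))] :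
    Measure.pi (fun i => (μ i).withDensity (f i)) =
      (Measure.pi μ).withDensity (fun x => ∏ i, f i (x i)) := by
  refine Measure.pi_eq fun s hs => ?_
  rw [withDensity_apply _ (MeasurableSet.univ_pi hs), ← lintegral_indicator (MeasurableSet.univ_pi hs)]
  simp_rw [withDensity_apply _ (hs _), ← lintegral_indicator (hs _)]
  rw [← lintegral_pi_prod μ _ (fun i => (hf i).indicator (hs i))]
  congr 1
  ext x
  by_cases hx : x ∈ Set.univ.pi s
  · rw [Set.indicator_of_mem hx]
    refine Finset.prod_congr rfl fun i _ => ?_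
    rw [Set.indicator_of_mem (hx i (Set.mem_univ i))]
  · rw [Set.indicator_of_notMem hx]
    simp only [Set.mem_pi, Set.mem_univ, true_imp_iff, not_forall] at hx
    obtain ⟨i, hi⟩ := hx
    symm
    exact Finset.prod_eq_zero (Finset.mem_univ i) (Set.indicator_of_notMem hi _)

theorem gauss_shift (b : ℝ) : (gaussianReal 0 1).map (fun z => b + z) =
    (gaussianReal 0 1).withDensity (fun w => ENNReal.ofReal (Real.exp (b * w - b ^ 2 / 2))) := by
  rw [gaussianReal_map_const_add, gaussianReal_of_var_ne_zero _ one_ne_zero,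
    gaussianReal_of_var_ne_zero _ one_ne_zero, ← withDensity_mul _ (by fun_prop) (by fun_prop)]
  congr 1
  ext x
  simp only [gaussianPDF, Pi.mul_apply]
  rw [← ENNReal.ofReal_mul (gaussianPDFReal_nonneg _ _ _)]
  simp only [gaussianPDFReal]
  rw [mul_assoc _ (Real.exp _) (Real.exp _), ← Real.exp_add]
  congr 3
  push_cast
  ring

theorem gauss_int (a t : ℝ) (ha : 0 ≤ a) :
    ∫⁻ x, ENNReal.ofReal (Real.exp (x * t - a * x ^ 2 / 2)) ∂(gaussianReal 0 1) =
      ENNReal.ofReal (Real.exp (t ^ 2 / (2 * (1 + a)) - Real.log (1 + a) / 2)) := by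
  have h1 : 0 < 1 + a := by linarith
  have hv : (Real.toNNReal (1 / (1 + a))) ≠ 0 := by
    rw [Ne, Real.toNNReal_eq_zero, not_le]; positivity
  rw [gaussianReal_of_var_ne_zero _ one_ne_zero, lintegral_withDensity_eq_lintegral_mul _
    (by fun_prop) (by fun_prop)]
  have : (gaussianPDF 0 1 * fun x => ENNReal.ofReal (Real.exp (x * t - a * x ^ 2 / 2))) =
      fun x => ENNReal.ofReal (Real.exp (t ^ 2 / (2 * (1 + a)) - Real.log (1 + a) / 2)) *
        gaussianPDF (t / (1 + a)) (Real.toNNReal (1 / (1 + a))) x := by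
    ext x
    simp only [gaussianPDF, Pi.mul_apply]
    rw [← ENNReal.ofReal_mul (gaussianPDFReal_nonneg _ _ _), ← ENNReal.ofReal_mul (by positivity)]
    congr 1
    simp only [gaussianPDFReal]
    rw [Real.coe_toNNReal _ (by positivity)]
    have hs : Real.exp (-(Real.log (1 + a) / 2)) = (√(1 + a))⁻¹ := by
      rw [Real.exp_neg, Real.exp_half, Real.exp_log h1]
    have hs2 : √(2 * Real.pi * (1 / (1 + a))) = √(2 * Real.pi) * (√(1 + a))⁻¹ := by
      rw [Real.sqrt_mul (by positivity), one_div, Real.sqrt_inv]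
    rw [hs2, sub_eq_add_neg (t ^ 2 / _), Real.exp_add, hs]
    have hpos : 0 < √(1 + a) := by positivity
    rw [mul_inv, inv_inv]
    have : ∀ A B C D : ℝ, A * (√(1 + a))⁻¹ * (B * √(1 + a) * D) = B * (A * D) := by
      intros; field_simp
    simp only [NNReal.coe_one, mul_one]
    rw [this _ _ 0, mul_assoc, ← Real.exp_add, ← Real.exp_add]
    congr 2
    field_simp
    ring
  rw [this, lintegral_const_mul _ (by fun_prop), lintegral_gaussianPDF_eq_one _ hv, mul_one]

noncomputable abbrev NN (L n : ℕ) : Measure (Fin n → Fin L → ℝ) := Measure.pi fun _ => stdGaussian L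

/-- shift-free channel (normalised noise). -/
noncomputable def JJ (L n : ℕ) (c : ℝ) : Measure ((Fin L → ℝ) × (Fin n → Fin L → ℝ)) :=
  ((stdGaussian L).prod (NN L n)).map (fun p => (p.1, fun i j => c * p.1 j + p.2 i j))

noncomputable def tt {L n : ℕ} (c : ℝ) (w : Fin n → Fin L → ℝ) (j : Fin L) : ℝ := c * ∑ i, w i j

@[fun_prop] theorem tt_meas {L n : ℕ} (c : ℝ) (j : Fin L) :
    Measurable (fun w : Fin n → Fin L → ℝ => tt c w j) := by
  unfold tt; fun_prop

noncomputable def hh {L n : ℕ} (c : ℝ) (x : Fin L → ℝ) (w : Fin n → Fin L → ℝ) : ℝ≥0∞ :=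
  ∏ j, ENNReal.ofReal (Real.exp (x j * tt c w j - (n * c ^ 2) * x j ^ 2 / 2))

noncomputable def mm {L n : ℕ} (c : ℝ) (w : Fin n → Fin L → ℝ) : ℝ≥0∞ :=
  ∏ j, ENNReal.ofReal (Real.exp (tt c w j ^ 2 / (2 * (1 + n * c ^ 2)) - Real.log (1 + n * c ^ 2) / 2))

theorem hh_meas {L n : ℕ} (c : ℝ) :
    Measurable (fun p : (Fin L → ℝ) × (Fin n → Fin L → ℝ) => hh c p.1 p.2) := by
  unfold hh tt; fun_prop

theorem mm_meas {L n : ℕ} (c : ℝ) :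
    Measurable (fun p : (Fin n → Fin L → ℝ) => mm c p) := by
  unfold mm; fun_prop

theorem N_shift (L n : ℕ) (c : ℝ) (x : Fin L → ℝ) :
    (NN L n).map (fun z i j => c * x j + z i j) = (NN L n).withDensity (hh c x) := by
  have e1 : (stdGaussian L).map (fun z j => c * x j + z j) = (stdGaussian L).withDensity
      (fun w => ∏ j, ENNReal.ofReal (Real.exp (c * x j * w j - (c * x j) ^ 2 / 2))) := by
    unfold stdGaussian
    have hp : ∀ j, IsProbabilityMeasure ((gaussianReal 0 1).map (fun z => c * x j + z)) :=
      fun j => Measure.isProbabilityMeasure_map (by fun_prop)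
    have hp2 := hp
    simp_rw [gauss_shift] at hp2
    rw [Measure.pi_map_pi (f := fun j z => c * x j + z) (fun _ => by fun_prop)]
    simp_rw [gauss_shift]
    exact pi_withDensity (fun _ => gaussianReal 0 1)
      (fun j w => ENNReal.ofReal (Real.exp (c * x j * w - (c * x j) ^ 2 / 2))) (fun _ => by fun_prop)
  have hms : Measurable (fun (z : Fin L → ℝ) j => c * x j + z j) := by fun_prop
  have hp : IsProbabilityMeasure ((stdGaussian L).map (fun z j => c * x j + z j)) :=
    Measure.isProbabilityMeasure_map hms.aemeasurable
  have hp2 := hp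
  rw [e1] at hp2
  rw [Measure.pi_map_pi (μ := fun _ : Fin n => stdGaussian L) (f := fun i (z : Fin L → ℝ) j => c * x j + z j)
    (fun _ => hms.aemeasurable)]
  simp_rw [e1]
  rw [pi_withDensity (fun _ => stdGaussian L)
    (fun _ w => ∏ j, ENNReal.ofReal (Real.exp (c * x j * w j - (c * x j) ^ 2 / 2)))
    (fun _ => by fun_prop)]
  congr 1
  ext w
  rw [Finset.prod_comm]
  unfold hh
  refine Finset.prod_congr rfl fun j _ => ?_
  rw [← ENNReal.ofReal_prod_of_nonneg (fun _ _ => by positivity), ← Real.exp_sum]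
  congr 2
  rw [Finset.sum_sub_distrib, ← Finset.mul_sum]
  simp [tt]
  ring

theorem JJ_density (L n : ℕ) (c : ℝ) :
    JJ L n c = ((stdGaussian L).prod (NN L n)).withDensity (fun p => hh c p.1 p.2) := by
  have hm : Measurable (fun p : (Fin L → ℝ) × (Fin n → Fin L → ℝ) =>
      (p.1, fun i j => c * p.1 j + p.2 i j)) := by fun_prop
  ext s hs
  unfold JJ
  rw [Measure.map_apply hm hs, Measure.prod_apply (hm hs), withDensity_apply _ hs,
    ← lintegral_indicator hs, lintegral_prod _ ((hh_meas c).indicator hs).aemeasurable]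
  refine lintegral_congr fun x => ?_
  have hs' : MeasurableSet (Prod.mk x ⁻¹' s) := measurable_prodMk_left hs
  have := congrArg (fun μ => μ (Prod.mk x ⁻¹' s)) (N_shift L n c x)
  rw [Measure.map_apply (by fun_prop) hs', withDensity_apply _ hs', ← lintegral_indicator hs'] at this
  exact this

theorem JJ_fst (L n : ℕ) (c : ℝ) : (JJ L n c).map Prod.fst = stdGaussian L := by
  unfold JJ
  rw [Measure.map_map measurable_fst (by fun_prop)]
  exact measurePreserving_fst.map_eq

theorem JJ_snd (L n : ℕ) (c : ℝ) : (JJ L n c).map Prod.snd = (NN L n).withDensity (mm c) := by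
  rw [JJ_density]
  ext s hs
  rw [Measure.map_apply measurable_snd hs, withDensity_apply _ (measurable_snd hs),
    ← lintegral_indicator (measurable_snd hs),
    lintegral_prod_symm _ ((hh_meas c).indicator (measurable_snd hs)).aemeasurable,
    withDensity_apply _ hs, ← lintegral_indicator hs]
  refine lintegral_congr fun w => ?_
  by_cases hw : w ∈ s
  · rw [Set.indicator_of_mem hw]
    simp only [Set.indicator, Set.mem_preimage, hw, if_true]
    unfold hh mm stdGaussian
    rw [lintegral_pi_prod (fun _ => gaussianReal 0 1) (fun j y => ENNReal.ofReal
      (Real.exp (y * tt c w j - (n * c ^ 2) * y ^ 2 / 2))) (fun _ => by fun_prop)]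
    refine Finset.prod_congr rfl fun j _ => ?_
    exact gauss_int _ _ (by positivity)
  · simp [hw]

instance (L n : ℕ) (c : ℝ) : IsProbabilityMeasure (JJ L n c) :=
  Measure.isProbabilityMeasure_map (by fun_prop)

noncomputable def ff {L n : ℕ} (c : ℝ) (p : (Fin L → ℝ) × (Fin n → Fin L → ℝ)) : ℝ :=
  ∑ j, (p.1 j * tt c p.2 j - (n * c ^ 2) * p.1 j ^ 2 / 2
    - tt c p.2 j ^ 2 / (2 * (1 + n * c ^ 2)) + Real.log (1 + n * c ^ 2) / 2)

theorem ff_meas {L n : ℕ} (c : ℝ) : Measurable (ff (L := L) (n := n) c) := by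
  unfold ff tt; fun_prop

theorem JJ_eq (L n : ℕ) (c : ℝ) : JJ L n c =
    (((JJ L n c).map Prod.fst).prod ((JJ L n c).map Prod.snd)).withDensity
      (fun p => ENNReal.ofReal (Real.exp (ff c p))) := by
  have hsf : IsProbabilityMeasure ((JJ L n c).map Prod.snd) :=
    Measure.isProbabilityMeasure_map (by fun_prop)
  rw [JJ_fst]
  rw [JJ_snd] at hsf ⊢
  rw [prod_withDensity_right (mm_meas c),
    ← withDensity_mul (f := fun z : (Fin L → ℝ) × (Fin n → Fin L → ℝ) => mm c z.2) _ ((mm_meas c).comp measurable_snd) (by have := ff_meas (L := L) (n := n) c; fun_prop),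
    JJ_density]
  congr 1
  ext p
  simp only [Pi.mul_apply, hh, mm, ff, Function.comp]
  rw [Real.exp_sum, ENNReal.ofReal_prod_of_nonneg (fun _ _ => by positivity),
    ← Finset.prod_mul_distrib]
  refine Finset.prod_congr rfl fun j _ => ?_
  rw [← ENNReal.ofReal_mul (by positivity), ← Real.exp_add]
  congr 2
  ring


theorem X_mp (L n : ℕ) (j : Fin L) :
    MeasurePreserving (fun p : (Fin L → ℝ) × (Fin n → Fin L → ℝ) => p.1 j)
      ((stdGaussian L).prod (NN L n)) (gaussianReal 0 1) :=
  (measurePreserving_eval (fun _ : Fin L => gaussianReal 0 1) j).comp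
    (measurePreserving_fst (μ := stdGaussian L) (ν := NN L n))

theorem z_mp (L n : ℕ) (i : Fin n) (j : Fin L) :
    MeasurePreserving (fun z : (Fin n → Fin L → ℝ) => z i j) (NN L n) (gaussianReal 0 1) :=
  (measurePreserving_eval (fun _ : Fin L => gaussianReal 0 1) j).comp
    (measurePreserving_eval (fun _ : Fin n => stdGaussian L) i)

theorem X_memLp (L n : ℕ) (j : Fin L) :
    MemLp (fun p : (Fin L → ℝ) × (Fin n → Fin L → ℝ) => p.1 j) 2
      ((stdGaussian L).prod (NN L n)) :=
  (memLp_id_gaussianReal' 2 (by simp)).comp_measurePreserving (X_mp L n j)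

theorem z_memLp (L n : ℕ) (i : Fin n) (j : Fin L) :
    MemLp (fun z : (Fin n → Fin L → ℝ) => z i j) 2 (NN L n) :=
  (memLp_id_gaussianReal' 2 (by simp)).comp_measurePreserving (z_mp L n i j)

theorem tt_memLp (L n : ℕ) (c : ℝ) (j : Fin L) :
    MemLp (fun z : (Fin n → Fin L → ℝ) => tt c z j) 2 (NN L n) := by
  unfold tt
  exact (memLp_finsetSum _ (fun i _ => z_memLp L n i j)).const_mul c

theorem sq_gauss : ∫ x, x ^ 2 ∂(gaussianReal 0 1) = 1 := by
  have h := variance_eq_sub (memLp_id_gaussianReal' (μ := 0) (v := 1) 2 (by simp))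
  rw [variance_id_gaussianReal] at h
  simpa using h.symm

theorem X_sq (L n : ℕ) (j : Fin L) :
    ∫ p, (p.1 j) ^ 2 ∂((stdGaussian L).prod (NN L n)) = 1 := by
  have h := (X_mp L n j).map_eq
  rw [← sq_gauss, ← h, integral_map (by fun_prop) (by fun_prop)]

theorem X_mean (L : ℕ) (j : Fin L) : ∫ x, x j ∂(stdGaussian L) = 0 := by
  have h := (measurePreserving_eval (fun _ : Fin L => gaussianReal 0 1) j).map_eq
  have h2 : ∫ x, x ∂(gaussianReal 0 1) = 0 := integral_id_gaussianReal
  rw [← h, integral_map (measurable_pi_apply j).aemeasurable (by fun_prop)] at h2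
  exact h2

theorem z_mean (L n : ℕ) (i : Fin n) (j : Fin L) : ∫ z, z i j ∂(NN L n) = 0 := by
  have h := (z_mp L n i j).map_eq
  have h2 : ∫ x, x ∂(gaussianReal 0 1) = 0 := integral_id_gaussianReal
  rw [← h, integral_map (z_mp L n i j).measurable.aemeasurable (by fun_prop)] at h2
  exact h2

theorem tt_mean (L n : ℕ) (c : ℝ) (j : Fin L) : ∫ z, tt c z j ∂(NN L n) = 0 := by
  unfold tt
  rw [integral_const_mul, integral_finsetSum _ (fun i _ => (z_memLp L n i j).integrable (by simp))]
  simp [z_mean]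

theorem tt_sq (L n : ℕ) (c : ℝ) (j : Fin L) : ∫ z, tt c z j ^ 2 ∂(NN L n) = n * c ^ 2 := by
  have h := variance_eq_sub (tt_memLp L n c j)
  rw [tt_mean] at h
  have hind := iIndepFun_pi (μ := fun _ : Fin n => stdGaussian L)
    (X := fun _ x => x j) (fun i => (measurable_pi_apply j).aemeasurable)
  have hv := IndepFun.variance_sum (s := Finset.univ) (fun i _ => z_memLp L n i j)
    (fun i _ k _ hik => hind.indepFun hik)
  have hv1 : ∀ i, variance (fun z : (Fin n → Fin L → ℝ) => z i j) (NN L n) = 1 := by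
    intro i
    rw [variance_eq_sub (z_memLp L n i j), z_mean]
    have h := (z_mp L n i j).map_eq
    have h2 := sq_gauss
    rw [← h, integral_map (z_mp L n i j).measurable.aemeasurable (by fun_prop)] at h2
    simpa using h2
  have e : (fun z : (Fin n → Fin L → ℝ) => tt c z j) =
      fun z => c * (∑ i, fun z : (Fin n → Fin L → ℝ) => z i j) z := by
    ext z; simp [tt]
  have h3 : variance (fun z : (Fin n → Fin L → ℝ) => tt c z j) (NN L n) = n * c ^ 2 := by
    rw [e, variance_const_mul, hv]
    simp [hv1]; ring
  rw [h3] at h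
  simpa using h.symm

theorem ff_comp {L n : ℕ} (c : ℝ) (p : (Fin L → ℝ) × (Fin n → Fin L → ℝ)) :
    ff c (p.1, fun i j => c * p.1 j + p.2 i j) =
      ∑ j, ((1 / (2 * (1 + n * c ^ 2))) * (n * c ^ 2 * p.1 j ^ 2 + 2 * (p.1 j * tt c p.2 j)
        - tt c p.2 j ^ 2) + Real.log (1 + n * c ^ 2) / 2) := by
  unfold ff
  refine Finset.sum_congr rfl fun j _ => ?_
  have h : tt c (fun (i : Fin n) j => c * p.1 j + p.2 i j) j = n * c ^ 2 * p.1 j + tt c p.2 j := by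
    simp [tt, Finset.sum_add_distrib]; ring
  simp only [h]
  have : (1 + n * c ^ 2 : ℝ) ≠ 0 := by positivity
  field_simp
  ring

theorem ff_int (L n : ℕ) (c : ℝ) : Integrable (ff c) (JJ L n c) ∧
    ∫ p, ff c p ∂(JJ L n c) = L / 2 * Real.log (1 + n * c ^ 2) := by
  have hm : Measurable (fun p : (Fin L → ℝ) × (Fin n → Fin L → ℝ) =>
      (p.1, fun i j => c * p.1 j + p.2 i j)) := by fun_prop
  have i1 : ∀ j, Integrable (fun p : (Fin L → ℝ) × (Fin n → Fin L → ℝ) => p.1 j ^ 2)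
      ((stdGaussian L).prod (NN L n)) := fun j => (X_memLp L n j).integrable_sq
  have ht : ∀ j, MemLp (fun p : (Fin L → ℝ) × (Fin n → Fin L → ℝ) => tt c p.2 j) 2
      ((stdGaussian L).prod (NN L n)) := fun j =>
    (tt_memLp L n c j).comp_measurePreserving measurePreserving_snd
  have i2 : ∀ j, Integrable (fun p : (Fin L → ℝ) × (Fin n → Fin L → ℝ) => p.1 j * tt c p.2 j)
      ((stdGaussian L).prod (NN L n)) := fun j => (X_memLp L n j).integrable_mul (ht j)
  have i3 : ∀ j, Integrable (fun p : (Fin L → ℝ) × (Fin n → Fin L → ℝ) => tt c p.2 j ^ 2)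
      ((stdGaussian L).prod (NN L n)) := fun j => (ht j).integrable_sq
  have i12 : ∀ j, Integrable (fun p : (Fin L → ℝ) × (Fin n → Fin L → ℝ) =>
      n * c ^ 2 * p.1 j ^ 2 + 2 * (p.1 j * tt c p.2 j)) ((stdGaussian L).prod (NN L n)) :=
    fun j => ((i1 j).const_mul _).add ((i2 j).const_mul _)
  have i123 : ∀ j, Integrable (fun p : (Fin L → ℝ) × (Fin n → Fin L → ℝ) =>
      n * c ^ 2 * p.1 j ^ 2 + 2 * (p.1 j * tt c p.2 j) - tt c p.2 j ^ 2)
      ((stdGaussian L).prod (NN L n)) := fun j => (i12 j).sub (i3 j)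
  have i4 : ∀ j, Integrable (fun p : (Fin L → ℝ) × (Fin n → Fin L → ℝ) =>
      (1 / (2 * (1 + n * c ^ 2))) * (n * c ^ 2 * p.1 j ^ 2 + 2 * (p.1 j * tt c p.2 j)
        - tt c p.2 j ^ 2) + Real.log (1 + n * c ^ 2) / 2) ((stdGaussian L).prod (NN L n)) :=
    fun j => ((i123 j).const_mul _).add (integrable_const _)
  have hfm := ff_meas (L := L) (n := n) c
  constructor
  · unfold JJ
    rw [integrable_map_measure hfm.aestronglyMeasurable hm.aemeasurable]
    simp only [Function.comp_def, ff_comp]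
    exact integrable_finsetSum _ fun j _ => i4 j
  · unfold JJ
    rw [integral_map hm.aemeasurable hfm.aestronglyMeasurable]
    simp only [ff_comp]
    rw [integral_finsetSum _ fun j _ => i4 j]
    have : ∀ j, ∫ p, ((1 / (2 * (1 + n * c ^ 2))) * (n * c ^ 2 * p.1 j ^ 2
        + 2 * (p.1 j * tt c p.2 j) - tt c p.2 j ^ 2) + Real.log (1 + n * c ^ 2) / 2)
        ∂((stdGaussian L).prod (NN L n)) = Real.log (1 + n * c ^ 2) / 2 := by
      intro j
      rw [integral_add ((i123 j).const_mul _) (integrable_const _), integral_const_mul,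
        integral_sub (i12 j) (i3 j), integral_add ((i1 j).const_mul _) ((i2 j).const_mul _),
        integral_const_mul, integral_const_mul, X_sq,
        integral_prod_mul (fun x : Fin L → ℝ => x j) (fun z => tt c z j), X_mean]
      have h5 : ∫ p : (Fin L → ℝ) × (Fin n → Fin L → ℝ), tt c p.2 j ^ 2
          ∂((stdGaussian L).prod (NN L n)) = n * c ^ 2 := by
        rw [← tt_sq L n c j, integral_fun_snd (fun z => tt c z j ^ 2)]; simp
      rw [h5]
      simp
    simp only [this]
    simp; ring

theorem JJ_kl (L n : ℕ) (c : ℝ) :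
    JJ L n c ≪ ((JJ L n c).map Prod.fst).prod ((JJ L n c).map Prod.snd) ∧
    InformationTheory.klDiv (JJ L n c) (((JJ L n c).map Prod.fst).prod ((JJ L n c).map Prod.snd)) =
      ENNReal.ofReal (L / 2 * Real.log (1 + n * c ^ 2)) := by
  have hac : JJ L n c ≪ ((JJ L n c).map Prod.fst).prod ((JJ L n c).map Prod.snd) := by
    conv_lhs => rw [JJ_eq]
    exact withDensity_absolutelyContinuous _ _
  refine ⟨hac, ?_⟩
  have h1 : IsProbabilityMeasure ((JJ L n c).map Prod.fst) :=
    Measure.isProbabilityMeasure_map (by fun_prop)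
  have h2 : IsProbabilityMeasure ((JJ L n c).map Prod.snd) :=
    Measure.isProbabilityMeasure_map (by fun_prop)
  have hfm := ff_meas (L := L) (n := n) c
  have hd := Measure.rnDeriv_withDensity
    (((JJ L n c).map Prod.fst).prod ((JJ L n c).map Prod.snd))
    (f := fun p => ENNReal.ofReal (Real.exp (ff c p))) (by fun_prop)
  rw [← JJ_eq] at hd
  have hl : llr (JJ L n c) (((JJ L n c).map Prod.fst).prod ((JJ L n c).map Prod.snd))
      =ᵐ[JJ L n c] ff c := by
    filter_upwards [hac.ae_le hd] with p hp
    rw [llr, hp, ENNReal.toReal_ofReal (by positivity), Real.log_exp]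
  obtain ⟨hi, he⟩ := ff_int L n c
  have hil := hi.congr hl.symm
  rw [InformationTheory.klDiv_of_ac_of_integrable hac hil, integral_congr_ae hl, he]
  simp

/-- forward map adding shifts -/
def gg (L n : ℕ) (σ : ℝ) (q : (Fin n → Fin L → ℝ) × (Fin n → Fin L)) : Fin n → Fin L → ℝ :=
  fun i j => σ * q.1 i (j + q.2 i)

theorem shift_meas (L n : ℕ) :
    Measurable (fun q : (Fin n → Fin L → ℝ) × (Fin n → Fin L) => fun i j => q.1 i (j + q.2 i)) := by
  refine measurable_pi_lambda _ fun i => measurable_pi_lambda _ fun j => ?_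
  have : Measurable (fun q : (Fin L → ℝ) × Fin L => q.1 (j + q.2)) :=
    measurable_from_prod_countable_left (fun l => measurable_pi_apply (j + l))
  have h2 : Measurable (fun q : (Fin n → Fin L → ℝ) × (Fin n → Fin L) => (q.1 i, q.2 i)) := by
    fun_prop
  exact this.comp h2

theorem gg_meas (L n : ℕ) (σ : ℝ) : Measurable (gg L n σ) := by
  have := shift_meas L n
  unfold gg
  refine measurable_pi_lambda _ fun i => measurable_pi_lambda _ fun j => ?_
  exact ((measurable_pi_apply j).comp ((measurable_pi_apply i).comp this)).const_mul σ

theorem unif_prob (L : ℕ) (hL : 1 ≤ L) : IsProbabilityMeasure (unifFin L) := by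
  constructor
  unfold unifFin
  simp [Measure.count_univ]
  exact ENNReal.inv_mul_cancel (by simp; omega) (by simp)

theorem rot_mp (L n : ℕ) (hL : 1 ≤ L) (l : Fin n → Fin L) :
    (NN L n).map (fun z i j => z i (j + l i)) = NN L n := by
  have : NeZero L := ⟨by omega⟩
  have h : ∀ k : Fin L, (stdGaussian L).map (fun z j => z (j + k)) = stdGaussian L := by
    intro k
    have h0 := (measurePreserving_piCongrLeft (fun _ : Fin L => gaussianReal 0 1)
      (Equiv.addRight k).symm).map_eq
    have h1 : (fun (z : Fin L → ℝ) j => z (j + k)) =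
        MeasurableEquiv.piCongrLeft (fun _ : Fin L => ℝ) (Equiv.addRight k).symm := by
      ext z j
      simp only [MeasurableEquiv.coe_piCongrLeft, Equiv.piCongrLeft_apply]
      exact (eq_rec_constant _ _).symm
    rw [h1]
    exact h0
  have hms : ∀ k : Fin L, Measurable (fun (z : Fin L → ℝ) j => z (j + k)) := fun k => by fun_prop
  have hp : ∀ i, IsProbabilityMeasure ((stdGaussian L).map (fun z j => z (j + l i))) := fun i =>
    Measure.isProbabilityMeasure_map (hms _).aemeasurable
  rw [Measure.pi_map_pi (μ := fun _ : Fin n => stdGaussian L)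
    (f := fun i (z : Fin L → ℝ) j => z (j + l i)) (fun i => (hms _).aemeasurable)]
  simp_rw [h]

noncomputable abbrev UU (L n : ℕ) : Measure (Fin n → Fin L) := Measure.pi fun _ => unifFin L

theorem joint_eq (L n : ℕ) (hL : 1 ≤ L) (σ : ℝ) (hσ : 0 < σ) :
    mraJoint L n σ = ((JJ L n (1 / σ)).prod (UU L n)).map
      (fun p => (p.1.1, gg L n σ (p.1.2, p.2))) := by
  have hU := unif_prob L hL
  have hg := gg_meas L n σ
  have hs := shift_meas L n
  have hmY : Measurable (fun ω => (ω.1, mraY L n σ ω)) := by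
    refine measurable_fst.prodMk ?_
    refine measurable_pi_lambda _ fun i => measurable_pi_lambda _ fun j => ?_
    have : Measurable (fun q : (Fin L → ℝ) × Fin L => q.1 (j + q.2)) :=
      measurable_from_prod_countable_left (fun l => measurable_pi_apply (j + l))
    have h1 : Measurable (fun ω : (Fin L → ℝ) × (Fin n → Fin L) × (Fin n → Fin L → ℝ) =>
      (ω.1, ω.2.1 i)) := by fun_prop
    have h2 := this.comp h1
    have h3 : Measurable (fun ω : (Fin L → ℝ) × (Fin n → Fin L) × (Fin n → Fin L → ℝ) =>
      ω.2.2 i j) := by fun_prop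
    exact h2.add (h3.const_mul σ)
  -- rotation invariance of the noise
  have hskew := MeasurePreserving.skew_product (MeasurePreserving.id (UU L n))
    (g := fun (l : Fin n → Fin L) (z : Fin n → Fin L → ℝ) => fun i j => z i (j + l i))
    (μc := NN L n) (μd := NN L n) (hs.comp measurable_swap)
    (Eventually.of_forall fun l => rot_mp L n hL l)
  have hbase := (MeasurePreserving.id (stdGaussian L)).prod hskew
  have hJ : (JJ L n (1 / σ)).prod (UU L n) =
      (((stdGaussian L).prod (NN L n)).prod (UU L n)).map (Prod.map
        (fun p => (p.1, fun i j => (1 / σ) * p.1 j + p.2 i j)) id) := by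
    unfold JJ
    rw [← Measure.map_prod_map _ _ (by fun_prop) measurable_id, Measure.map_id]
  have hsw : ((stdGaussian L).prod (NN L n)).prod (UU L n) =
      ((stdGaussian L).prod ((UU L n).prod (NN L n))).map (fun ω => ((ω.1, ω.2.2), ω.2.1)) := by
    have a1 := (measurePreserving_prodAssoc (stdGaussian L) (NN L n) (UU L n)).symm
    have a2 := (MeasurePreserving.id (stdGaussian L)).prod
      (Measure.measurePreserving_swap (μ := UU L n) (ν := NN L n))
    exact (a1.comp a2).map_eq.symm
  rw [hJ, hsw, Measure.map_map (by fun_prop) (by fun_prop), Measure.map_map (by fun_prop) (by fun_prop)]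
  unfold mraJoint mraBase
  conv_lhs => rw [← hbase.map_eq]
  rw [Measure.map_map hmY hbase.measurable]
  congr 1
  ext ω
  · rfl
  · simp only [Function.comp, mraY, gg, Prod.map, id]
    field_simp

theorem prod_eq (L n : ℕ) (hL : 1 ≤ L) (σ : ℝ) (hσ : 0 < σ) :
    ((mraJoint L n σ).map Prod.fst).prod ((mraJoint L n σ).map Prod.snd) =
    ((((JJ L n (1 / σ)).map Prod.fst).prod ((JJ L n (1 / σ)).map Prod.snd)).prod (UU L n)).map
      (fun p => (p.1.1, gg L n σ (p.1.2, p.2))) := by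
  have hU := unif_prob L hL
  have hg := gg_meas L n σ
  have h1 : IsProbabilityMeasure ((JJ L n (1 / σ)).map Prod.fst) :=
    Measure.isProbabilityMeasure_map (by fun_prop)
  have h2 : IsProbabilityMeasure ((JJ L n (1 / σ)).map Prod.snd) :=
    Measure.isProbabilityMeasure_map (by fun_prop)
  have e1 : (mraJoint L n σ).map Prod.fst = (JJ L n (1 / σ)).map Prod.fst := by
    rw [joint_eq L n hL σ hσ, Measure.map_map measurable_fst (by fun_prop)]
    have := (measurePreserving_fst (μ := JJ L n (1 / σ)) (ν := UU L n)).map_eq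
    conv_rhs => rw [← this, Measure.map_map measurable_fst measurable_fst]
    rfl
  have e2 : (mraJoint L n σ).map Prod.snd =
      (((JJ L n (1 / σ)).map Prod.snd).prod (UU L n)).map (gg L n σ) := by
    rw [joint_eq L n hL σ hσ, Measure.map_map measurable_snd (by fun_prop)]
    have : ((JJ L n (1 / σ)).map Prod.snd).prod (UU L n) =
        ((JJ L n (1 / σ)).prod (UU L n)).map (Prod.map Prod.snd id) := by
      rw [← Measure.map_prod_map _ _ measurable_snd measurable_id, Measure.map_id]
    rw [this, Measure.map_map hg (by fun_prop)]
    rfl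
  rw [e1, e2]
  have a1 := (measurePreserving_prodAssoc ((JJ L n (1 / σ)).map Prod.fst)
    ((JJ L n (1 / σ)).map Prod.snd) (UU L n)).map_eq
  have : ((JJ L n (1 / σ)).map Prod.fst).prod
      ((((JJ L n (1 / σ)).map Prod.snd).prod (UU L n)).map (gg L n σ)) =
      (((JJ L n (1 / σ)).map Prod.fst).prod
      (((JJ L n (1 / σ)).map Prod.snd).prod (UU L n))).map (Prod.map id (gg L n σ)) := by
    rw [← Measure.map_prod_map _ _ measurable_id hg, Measure.map_id]
  rw [this, ← a1, Measure.map_map (by fun_prop) (by fun_prop)]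
  rfl

/-- mutual information bound via the shift-free channel. In the MRA model,
`I(X; Y^n) ≤ (L/2)·log(1 + n/σ²)`. -/
theorem mutual_info_upper_bound_gaussian (L n : ℕ) (hL : 1 ≤ L) (σ : ℝ) (hσ : 0 < σ) :
    mutualInfo (mraJoint L n σ) ≤ (L : ℝ) / 2 * Real.log (1 + n / σ ^ 2) := by
  have hU := unif_prob L hL
  have hg := gg_meas L n σ
  have hgm : Measurable (fun p : ((Fin L → ℝ) × (Fin n → Fin L → ℝ)) × (Fin n → Fin L) =>
      (p.1.1, gg L n σ (p.1.2, p.2))) := by fun_prop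
  have h1 : IsProbabilityMeasure ((JJ L n (1 / σ)).map Prod.fst) :=
    Measure.isProbabilityMeasure_map (by fun_prop)
  have h2 : IsProbabilityMeasure ((JJ L n (1 / σ)).map Prod.snd) :=
    Measure.isProbabilityMeasure_map (by fun_prop)
  obtain ⟨hac, hkl⟩ := JJ_kl L n (1 / σ)
  have hj := joint_eq L n hL σ hσ
  have hpr := prod_eq L n hL σ hσ
  have hP : IsProbabilityMeasure (mraJoint L n σ) := by
    rw [hj]; exact Measure.isProbabilityMeasure_map hgm.aemeasurable
  have hQ : IsProbabilityMeasure
      (((mraJoint L n σ).map Prod.fst).prod ((mraJoint L n σ).map Prod.snd)) := by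
    rw [hpr]; exact Measure.isProbabilityMeasure_map hgm.aemeasurable
  have hacJ : mraJoint L n σ ≪
      ((mraJoint L n σ).map Prod.fst).prod ((mraJoint L n σ).map Prod.snd) := by
    rw [hpr, hj]
    exact (hac.prod Measure.AbsolutelyContinuous.rfl).map hgm
  have hle : InformationTheory.klDiv (mraJoint L n σ)
      (((mraJoint L n σ).map Prod.fst).prod ((mraJoint L n σ).map Prod.snd)) ≤
      ENNReal.ofReal (L / 2 * Real.log (1 + n * (1 / σ) ^ 2)) := by
    rw [hpr, hj, ← hkl]
    refine (InformationTheory.klDiv_map_le _ _ hgm).trans ?_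
    rw [← Measure.compProd_const, ← Measure.compProd_const, InformationTheory.klDiv_compProd_left]
  have hmi : mutualInfo (mraJoint L n σ) = (InformationTheory.klDiv (mraJoint L n σ)
      (((mraJoint L n σ).map Prod.fst).prod ((mraJoint L n σ).map Prod.snd))).toReal := by
    rw [InformationTheory.toReal_klDiv_of_measure_eq hacJ (by simp)]
    rfl
  rw [hmi]
  have e : (L : ℝ) / 2 * Real.log (1 + n / σ ^ 2) = L / 2 * Real.log (1 + n * (1 / σ) ^ 2) := by
    congr 3
    field_simp
  rw [e]
  refine ENNReal.toReal_le_of_le_ofReal ?_ hle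
  have : 0 ≤ Real.log (1 + n * (1 / σ) ^ 2) :=
    Real.log_nonneg (le_add_of_nonneg_right (by positivity))
  positivity

end MRAformal
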